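/- Fix real α, β > −1, j ∈ ℕ with j ≥ 1, γ ∈ ℝ, M > 0, and a sequence M_n ≥ 0 with lim_{n→∞} M_n n^γ = M. If γ < 2(α+2j+1), then the largest real zero y_{n,1} of Q_n satisfies lim_{n→∞} y_{n,1} = 1. -/

import Mathlib

open Polynomial Filter

/-- The Jacobi polynomial `P_n^{(α,β)}` as a real polynomial. -/
noncomputable def jacobiP (α β : ℝ) (n : ℕ) : Polynomial ℝ :=
  ∑ k ∈ Finset.range (n + 1),
    Polynomial.C (Real.Gamma (n + α + 1) / (Real.Gamma ((n : ℝ) - k + 1) * Real.Gamma (α + k + 1)) *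
        (Real.Gamma (n + β + 1) / (Real.Gamma ((k : ℝ) + 1) * Real.Gamma ((n : ℝ) - k + β + 1)))) *
      (Polynomial.C (2⁻¹ : ℝ) * (Polynomial.X - 1)) ^ k *
      (Polynomial.C (2⁻¹ : ℝ) * (Polynomial.X + 1)) ^ (n - k)

/-- The squared Jacobi norm `‖P_n^{(α,β)}‖²`. -/
noncomputable def jacobiNormSq (α β : ℝ) (n : ℕ) : ℝ :=
  ∫ x in (-1 : ℝ)..1, (jacobiP α β n).eval x ^ 2 * (1 - x) ^ α * (1 + x) ^ β

/-- The kernel `K_n^{(j,k)}(x,y)`. -/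
noncomputable def kernK (α β : ℝ) (j k n : ℕ) (x y : ℝ) : ℝ :=
  ∑ i ∈ Finset.range (n + 1),
    (Polynomial.derivative^[j] (jacobiP α β i)).eval x *
      (Polynomial.derivative^[k] (jacobiP α β i)).eval y / jacobiNormSq α β i

/-- The kernel `K_n^{(j,0)}(1,·)` as a polynomial. -/
noncomputable def kernKPoly (α β : ℝ) (j n : ℕ) : Polynomial ℝ :=
  ∑ i ∈ Finset.range (n + 1),
    Polynomial.C ((Polynomial.derivative^[j] (jacobiP α β i)).eval 1 / jacobiNormSq α β i) *
      jacobiP α β i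

/-- The varying Sobolev inner product `(f,g)_{S,n}` with mass `m`. -/
noncomputable def sobInner (α β : ℝ) (j : ℕ) (m : ℝ) (f g : Polynomial ℝ) : ℝ :=
  (∫ x in (-1 : ℝ)..1, f.eval x * g.eval x * (1 - x) ^ α * (1 + x) ^ β) +
    m * (Polynomial.derivative^[j] f).eval 1 * (Polynomial.derivative^[j] g).eval 1

/-- The Jacobi–Sobolev orthogonal polynomial `Q_n`. -/
noncomputable def sobQ (α β : ℝ) (j : ℕ) (Ms : ℕ → ℝ) (n : ℕ) : Polynomial ℝ :=
  jacobiP α β n -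
    Polynomial.C (Ms n * (Polynomial.derivative^[j] (jacobiP α β n)).eval 1 /
        (1 + Ms n * kernK α β j j (n - 1) 1 1)) *
      kernKPoly α β j (n - 1)


lemma wt_integrable {a b : ℝ} (ha : -1 < a) (hb : -1 < b) :
    IntervalIntegrable (fun x : ℝ => (1 - x) ^ a * (1 + x) ^ b) MeasureTheory.volume (-1) 1 := by
  have h0 : ∀ a b : ℝ, -1 < b →
      IntervalIntegrable (fun x : ℝ => (1 - x) ^ a * (1 + x) ^ b) MeasureTheory.volume (-1) 0 := by
    intro a b hb
    have h1 : IntervalIntegrable (fun x : ℝ => x ^ b) MeasureTheory.volume 0 1 :=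
      intervalIntegral.intervalIntegrable_rpow' hb
    have h2 := h1.comp_add_left 1
    norm_num at h2
    refine h2.continuousOn_mul ?_
    refine ContinuousOn.rpow_const (by fun_prop) ?_
    intro x hx
    rw [Set.uIcc_of_le (by norm_num)] at hx
    left; linarith [hx.2]
  have h3 := (h0 b a ha).comp_mul_left (c := -1)
  norm_num at h3
  refine (h0 a b hb).trans ?_
  have h4 := h3.symm
  refine h4.congr ?_
  intro x hx
  simp only
  rw [mul_comm]
  simp [sub_eq_add_neg]

lemma wt_beta {a b : ℝ} (ha : -1 < a) (hb : -1 < b) :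
    ∫ x in (-1 : ℝ)..1, (1 - x) ^ a * (1 + x) ^ b =
      2 ^ (a + b + 1) * (Real.Gamma (a + 1) * Real.Gamma (b + 1) / Real.Gamma (a + b + 2)) := by
  have h1 := ProbabilityTheory.beta_eq_betaIntegralReal (b + 1) (a + 1) (by linarith) (by linarith)
  have h2 : Complex.betaIntegral ((b + 1 : ℝ) : ℂ) ((a + 1 : ℝ) : ℂ) =
      ((∫ x in (0 : ℝ)..1, x ^ b * (1 - x) ^ a : ℝ) : ℂ) := by
    rw [Complex.betaIntegral, ← intervalIntegral.integral_ofReal]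
    apply intervalIntegral.integral_congr
    intro x hx
    rw [Set.uIcc_of_le (by norm_num)] at hx
    simp only
    rw [Complex.ofReal_mul, Complex.ofReal_cpow hx.1, Complex.ofReal_cpow (by linarith [hx.2])]
    push_cast
    simp
  rw [h2, Complex.ofReal_re] at h1
  have h3 := intervalIntegral.integral_comp_mul_add (a := 0) (b := 1) (c := 2)
    (fun x : ℝ => (1 - x) ^ a * (1 + x) ^ b) (by norm_num) (-1)
  norm_num at h3
  have h4 : ∫ x in (0 : ℝ)..1, (1 - (2 * x + -1)) ^ a * (2 * x) ^ b =
      2 ^ (a + b) * ∫ x in (0 : ℝ)..1, x ^ b * (1 - x) ^ a := by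
    rw [← intervalIntegral.integral_const_mul]
    apply intervalIntegral.integral_congr
    intro x hx
    rw [Set.uIcc_of_le (by norm_num)] at hx
    simp only
    rw [show 1 - (2 * x + -1) = 2 * (1 - x) by ring,
      Real.mul_rpow (by norm_num) (by linarith [hx.2]), Real.mul_rpow (by norm_num) hx.1,
      Real.rpow_add (by norm_num)]
    ring
  rw [h4, ← h1, ProbabilityTheory.beta] at h3
  rw [Real.rpow_add (by norm_num) (a + b) 1, Real.rpow_one]
  rw [show b + 1 + (a + 1) = a + b + 2 by ring] at h3
  linear_combination (-2) * h3

lemma gamma_asc (s : ℝ) (hs : 0 < s) (m : ℕ) :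
    Real.Gamma (s + m) = (ascPochhammer ℝ m).eval s * Real.Gamma s := by
  induction m with
  | zero => simp
  | succ m ih =>
    rw [ascPochhammer_succ_eval]
    push_cast
    rw [← add_assoc, Real.Gamma_add_one (by positivity), ih]
    ring

lemma alt_sum_zero (p : Polynomial ℝ) (n : ℕ) (h : p.natDegree < n) :
    ∑ k ∈ Finset.range (n + 1), (-1 : ℝ) ^ k * (n.choose k) * p.eval (k : ℝ) = 0 := by
  have h1 := congrFun (Polynomial.fwdDiff_iter_eq_zero_of_degree_lt h) 0
  rw [fwdDiff_iter_eq_sum_shift] at h1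
  have h2 := congrArg (fun t => (-1 : ℝ) ^ n * t) h1
  simp only [Finset.mul_sum, Pi.zero_apply, mul_zero] at h2
  rw [← h2]
  apply Finset.sum_congr rfl
  intro k hk
  have hk' : k ≤ n := by simpa [Nat.lt_succ_iff] using hk
  simp
  obtain ⟨d, rfl⟩ := Nat.exists_eq_add_of_le hk'
  rw [Nat.add_sub_cancel_left, pow_add]
  have : (-1 : ℝ) ^ d * (-1) ^ d = 1 := by rw [← mul_pow]; simp
  linear_combination (-(-1 : ℝ) ^ k * ((k + d).choose k) * p.eval (k : ℝ)) * this

/-- Integration against the Jacobi weight. -/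
noncomputable def wtL (α β : ℝ) (f : Polynomial ℝ) : ℝ :=
  ∫ x in (-1 : ℝ)..1, f.eval x * ((1 - x) ^ α * (1 + x) ^ β)

lemma wtL_integrable {α β : ℝ} (hα : -1 < α) (hβ : -1 < β) (f : Polynomial ℝ) :
    IntervalIntegrable (fun x : ℝ => f.eval x * ((1 - x) ^ α * (1 + x) ^ β))
      MeasureTheory.volume (-1) 1 :=
  (wt_integrable hα hβ).continuousOn_mul f.continuous.continuousOn

lemma wtL_add {α β : ℝ} (hα : -1 < α) (hβ : -1 < β) (f g : Polynomial ℝ) :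
    wtL α β (f + g) = wtL α β f + wtL α β g := by
  unfold wtL
  rw [← intervalIntegral.integral_add (wtL_integrable hα hβ f) (wtL_integrable hα hβ g)]
  congr 1; ext x; simp; ring

lemma wtL_C_mul (α β : ℝ) (c : ℝ) (f : Polynomial ℝ) :
    wtL α β (C c * f) = c * wtL α β f := by
  unfold wtL
  rw [← intervalIntegral.integral_const_mul]
  congr 1; ext x; simp; ring

lemma wtL_sub {α β : ℝ} (hα : -1 < α) (hβ : -1 < β) (f g : Polynomial ℝ) :
    wtL α β (f - g) = wtL α β f - wtL α β g := by
  have h := wtL_add hα hβ f (C (-1) * g)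
  rw [wtL_C_mul] at h
  have e : f - g = f + C (-1) * g := by simp [sub_eq_add_neg]
  rw [e, h]; ring

lemma wtL_zero (α β : ℝ) : wtL α β 0 = 0 := by simp [wtL]

lemma wtL_sum {α β : ℝ} (hα : -1 < α) (hβ : -1 < β) {ι : Type} (s : Finset ι)
    (f : ι → Polynomial ℝ) : wtL α β (∑ i ∈ s, f i) = ∑ i ∈ s, wtL α β (f i) := by
  classical
  induction s using Finset.induction_on with
  | empty => simp [wtL_zero]
  | insert a s ha ih => rw [Finset.sum_insert ha, Finset.sum_insert ha, wtL_add hα hβ, ih]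

lemma wtL_pos {α β : ℝ} (hα : -1 < α) (hβ : -1 < β) (f : Polynomial ℝ) (hf : f ≠ 0)
    (h : ∀ x ∈ Set.Ioo (-1 : ℝ) 1, 0 ≤ f.eval x) : 0 < wtL α β f := by
  unfold wtL
  have hw : ∀ x ∈ Set.Ioo (-1 : ℝ) 1, 0 < (1 - x) ^ α * (1 + x) ^ β := fun x hx =>
    mul_pos (Real.rpow_pos_of_pos (by linarith [hx.2]) _)
      (Real.rpow_pos_of_pos (by linarith [hx.1]) _)
  have hae : ∀ᵐ x ∂(MeasureTheory.volume.restrict (Set.Ioc (-1 : ℝ) 1)),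
      0 ≤ f.eval x * ((1 - x) ^ α * (1 + x) ^ β) := by
    rw [← MeasureTheory.restrict_Ioo_eq_restrict_Ioc]
    filter_upwards [MeasureTheory.ae_restrict_mem measurableSet_Ioo] with x hx
    exact mul_nonneg (h x hx) (hw x hx).le
  rw [intervalIntegral.integral_of_le (by norm_num)]
  have hi := wtL_integrable hα hβ f
  rw [intervalIntegrable_iff_integrableOn_Ioc_of_le (by norm_num)] at hi
  rw [MeasureTheory.setIntegral_pos_iff_support_of_nonneg_ae hae hi]
  have hsub : Set.Ioo (-1 : ℝ) 1 \ (f.roots.toFinset : Set ℝ) ⊆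
      (Function.support fun x => f.eval x * ((1 - x) ^ α * (1 + x) ^ β)) ∩ Set.Ioc (-1) 1 := by
    rintro x ⟨hx, hx2⟩
    refine ⟨?_, Set.Ioo_subset_Ioc_self hx⟩
    have : f.eval x ≠ 0 := by
      intro h0; apply hx2; simp [hf, h0]
    exact mul_ne_zero this (hw x hx).ne'
  refine lt_of_lt_of_le ?_ (MeasureTheory.measure_mono hsub)
  rw [MeasureTheory.measure_sdiff_null (Set.Finite.measure_zero (Finset.finite_toSet _) _)]
  simp

/-- The scalar coefficients in the explicit Jacobi formula. -/
noncomputable def jacC (α β : ℝ) (n k : ℕ) : ℝ :=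
  Real.Gamma (n + α + 1) / (Real.Gamma ((n : ℝ) - k + 1) * Real.Gamma (α + k + 1)) *
        (Real.Gamma (n + β + 1) / (Real.Gamma ((k : ℝ) + 1) * Real.Gamma ((n : ℝ) - k + β + 1)))

lemma jacC_pos {α β : ℝ} (hα : -1 < α) (hβ : -1 < β) {n k : ℕ} (hk : k ≤ n) :
    0 < jacC α β n k := by
  have h1 : (k : ℝ) ≤ n := by exact_mod_cast hk
  have h2 : (0 : ℝ) ≤ k := by positivity
  unfold jacC
  apply mul_pos <;> apply div_pos
  · exact Real.Gamma_pos_of_pos (by linarith)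
  · exact mul_pos (Real.Gamma_pos_of_pos (by linarith)) (Real.Gamma_pos_of_pos (by linarith))
  · exact Real.Gamma_pos_of_pos (by linarith)
  · exact mul_pos (Real.Gamma_pos_of_pos (by linarith)) (Real.Gamma_pos_of_pos (by linarith))

lemma jacobiP_eq (α β : ℝ) (n : ℕ) : jacobiP α β n = ∑ k ∈ Finset.range (n + 1),
    C (jacC α β n k) * (C (2⁻¹ : ℝ) * (X - 1)) ^ k * (C (2⁻¹ : ℝ) * (X + 1)) ^ (n - k) := rfl

lemma jacobiP_natDegree_le (α β : ℝ) (n : ℕ) : (jacobiP α β n).natDegree ≤ n := by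
  rw [jacobiP_eq]
  apply natDegree_sum_le_of_forall_le
  intro k hk
  have hk' : k ≤ n := by simpa [Nat.lt_succ_iff] using hk
  have : k + (n - k) = n := by omega
  have h1 : (C (2⁻¹ : ℝ) * (X - 1)).natDegree ≤ 1 := by compute_degree
  have h2 : (C (2⁻¹ : ℝ) * (X + 1)).natDegree ≤ 1 := by compute_degree
  have h3 := natDegree_pow_le_of_le k h1
  have h4 := natDegree_pow_le_of_le (n - k) h2
  refine natDegree_mul_le.trans ?_
  have := natDegree_C_mul_le (jacC α β n k) ((C (2⁻¹ : ℝ) * (X - 1)) ^ k)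
  omega

lemma jacobiP_coeff_pos {α β : ℝ} (hα : -1 < α) (hβ : -1 < β) (n : ℕ) :
    0 < (jacobiP α β n).coeff n := by
  rw [jacobiP_eq, finsetSum_coeff]
  apply Finset.sum_pos _ ⟨0, by simp⟩
  intro k hk
  have hk' : k ≤ n := by simpa [Nat.lt_succ_iff] using hk
  have h1 : (C (2⁻¹ : ℝ) * (X - 1)).natDegree ≤ 1 := by compute_degree
  have h2 : (C (2⁻¹ : ℝ) * (X + 1)).natDegree ≤ 1 := by compute_degree
  have h3 := natDegree_pow_le_of_le k h1
  have h4 := natDegree_pow_le_of_le (n - k) h2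
  rw [mul_assoc, coeff_C_mul]
  have : n = k + (n - k) := by omega
  have e : ((C (2⁻¹ : ℝ) * (X - 1)) ^ k * (C (2⁻¹ : ℝ) * (X + 1)) ^ (n - k)).coeff n =
      ((2⁻¹ : ℝ)) ^ k * (2⁻¹) ^ (n - k) := by
    conv_lhs => rw [show n = k * 1 + (n - k) * 1 by omega]
    rw [show k * 1 + (n - k) * 1 - k = (n - k) by omega]
    rw [coeff_mul_add_eq_of_natDegree_le h3 h4, coeff_pow_of_natDegree_le h1,
      coeff_pow_of_natDegree_le h2]
    simp [coeff_one, coeff_X]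
  rw [e]
  have := jacC_pos hα hβ hk'
  positivity

lemma jacobiP_natDegree {α β : ℝ} (hα : -1 < α) (hβ : -1 < β) (n : ℕ) :
    (jacobiP α β n).natDegree = n :=
  le_antisymm (jacobiP_natDegree_le α β n)
    (le_natDegree_of_ne_zero (jacobiP_coeff_pos hα hβ n).ne')

lemma jacobiP_ratio {α β : ℝ} (hα : -1 < α) (hβ : -1 < β) (n : ℕ) (hn : 1 ≤ n) :
    2 * (α + 1) * (derivative (jacobiP α β n)).eval 1 =
      n * (n + α + β + 1) * (jacobiP α β n).eval 1 := by
  obtain ⟨m, rfl⟩ : ∃ m, n = m + 1 := ⟨n - 1, by omega⟩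
  have h0 : (jacobiP α β (m + 1)).eval 1 = jacC α β (m + 1) 0 := by
    rw [jacobiP_eq, eval_finsetSum, Finset.sum_range_succ']
    rw [Finset.sum_eq_zero]
    · norm_num
    · intro k _; simp
  have h1 : (derivative (jacobiP α β (m + 1))).eval 1 =
      (m + 1) / 2 * jacC α β (m + 1) 0 + jacC α β (m + 1) 1 / 2 := by
    rw [jacobiP_eq, derivative_sum, eval_finsetSum, Finset.sum_range_succ', Finset.sum_range_succ']
    rw [Finset.sum_eq_zero]
    · simp only [derivative_mul, derivative_pow]
      norm_num
      ring
    · intro k _; simp [derivative_mul, derivative_pow]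
  have h2 : (α + 1) * jacC α β (m + 1) 1 = (m + 1) * (m + 1 + β) * jacC α β (m + 1) 0 := by
    unfold jacC
    have g1 := Real.Gamma_add_one (s := α + 1) (by linarith)
    have g2 := Real.Gamma_add_one (s := (m : ℝ) + 1) (by positivity)
    have g3 := Real.Gamma_add_one (s := (m : ℝ) + β + 1) (by
      have : (0 : ℝ) ≤ m := by positivity
      linarith)
    have p1 := Real.Gamma_pos_of_pos (s := α + 1) (by linarith)
    have p2 := Real.Gamma_pos_of_pos (s := (m : ℝ) + 1) (by positivity)
    have hm : (0 : ℝ) < m + β + 1 := by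
      have : (0 : ℝ) ≤ m := by positivity
      linarith
    have p3 := Real.Gamma_pos_of_pos hm
    push_cast
    rw [show (m : ℝ) + 1 - 1 + 1 = m + 1 by ring, show (m : ℝ) + 1 - 0 + 1 = m + 1 + 1 by ring,
      show (m : ℝ) + 1 - 1 + β + 1 = m + β + 1 by ring,
      show (m : ℝ) + 1 - 0 + β + 1 = m + β + 1 + 1 by ring, g1, g2, g3,
      show α + 0 + 1 = α + 1 by ring]
    norm_num
    have q1 : α + 1 ≠ 0 := by linarith
    field_simp
    ring
  rw [h0, h1]
  push_cast
  linear_combination h2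

lemma wtL_term {α β : ℝ} (hα : -1 < α) (hβ : -1 < β) {n k : ℕ} (hk : k ≤ n) (m : ℕ) :
    wtL α β ((C (2⁻¹ : ℝ) * (X - 1)) ^ k * (C (2⁻¹ : ℝ) * (X + 1)) ^ (n - k) * (1 - X) ^ m) =
      (-1) ^ k * ((2⁻¹ : ℝ) ^ n * 2 ^ (α + β + m + n + 1) / Real.Gamma (α + β + m + n + 2)) *
      (Real.Gamma (α + k + 1 + m) * Real.Gamma ((n : ℝ) - k + β + 1)) := by
  have hkn : (k : ℝ) ≤ n := by exact_mod_cast hk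
  have hk0 : (0 : ℝ) ≤ k := by positivity
  have hm0 : (0 : ℝ) ≤ m := by positivity
  have e := wt_beta (a := α + (m + k : ℕ)) (b := β + (n - k : ℕ))
    (by push_cast; linarith) (by
      have : (0 : ℝ) ≤ (n - k : ℕ) := by positivity
      linarith)
  rw [show α + ((m + k : ℕ) : ℝ) + (β + ((n - k : ℕ) : ℝ)) + 1 = α + β + m + n + 1 by
      push_cast [Nat.cast_sub hk]; ring,
    show α + ((m + k : ℕ) : ℝ) + (β + ((n - k : ℕ) : ℝ)) + 2 = α + β + m + n + 2 by
      push_cast [Nat.cast_sub hk]; ring,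
    show α + ((m + k : ℕ) : ℝ) + 1 = α + k + 1 + m by push_cast; ring,
    show β + ((n - k : ℕ) : ℝ) + 1 = n - k + β + 1 by push_cast [Nat.cast_sub hk]; ring] at e
  have e2 : wtL α β ((C (2⁻¹ : ℝ) * (X - 1)) ^ k * (C (2⁻¹ : ℝ) * (X + 1)) ^ (n - k) * (1 - X) ^ m)
      = ((-1) ^ k * (2⁻¹ : ℝ) ^ n) *
        ∫ x in (-1 : ℝ)..1, (1 - x) ^ (α + (m + k : ℕ)) * (1 + x) ^ (β + (n - k : ℕ)) := by
    unfold wtL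
    rw [← intervalIntegral.integral_const_mul]
    apply intervalIntegral.integral_congr_Ioo_of_le (by norm_num)
    intro x hx
    simp only
    rw [Real.rpow_add_natCast (by linarith [hx.2]), Real.rpow_add_natCast (by linarith [hx.1])]
    simp only [eval_mul, eval_pow, eval_C, eval_sub, eval_add, eval_X, eval_one]
    obtain ⟨d, rfl⟩ := Nat.exists_eq_add_of_le hk
    rw [Nat.add_sub_cancel_left]
    rw [show 2⁻¹ * (x - 1) = (-1) * 2⁻¹ * (1 - x) by ring]
    simp only [mul_pow, pow_add]
    ring
  rw [e2, e]
  ring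

lemma jacobi_orth_pow {α β : ℝ} (hα : -1 < α) (hβ : -1 < β) {n m : ℕ} (hm : m < n) :
    wtL α β (jacobiP α β n * (1 - X) ^ m) = 0 := by
  rw [jacobiP_eq, Finset.sum_mul, wtL_sum hα hβ]
  have hp : ((ascPochhammer ℝ m).comp (X + C (α + 1))).natDegree < n := by
    rw [natDegree_comp, natDegree_X_add_C, ascPochhammer_natDegree]; omega
  have h := alt_sum_zero _ n hp
  set A : ℝ := (2⁻¹ : ℝ) ^ n * 2 ^ (α + β + m + n + 1) / Real.Gamma (α + β + m + n + 2)
  rw [← mul_zero (A * Real.Gamma (n + α + 1) * Real.Gamma (n + β + 1) / n.factorial), ← h,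
    Finset.mul_sum]
  apply Finset.sum_congr rfl
  intro k hk
  have hk' : k ≤ n := by simpa [Nat.lt_succ_iff] using hk
  have hkn : (k : ℝ) ≤ n := by exact_mod_cast hk'
  have hk0 : (0 : ℝ) ≤ k := by positivity
  rw [mul_assoc, mul_assoc, wtL_C_mul, ← mul_assoc, wtL_term hα hβ hk', eval_comp,
    gamma_asc _ (by linarith)]
  have p1 := Real.Gamma_pos_of_pos (s := α + k + 1) (by linarith)
  have p2 := Real.Gamma_pos_of_pos (s := (n : ℝ) - k + β + 1) (by linarith)
  have f1 : Real.Gamma ((n : ℝ) - k + 1) = (n - k).factorial := by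
    rw [← Nat.cast_sub hk', Real.Gamma_nat_eq_factorial]
  have f2 : Real.Gamma ((k : ℝ) + 1) = k.factorial := Real.Gamma_nat_eq_factorial k
  unfold jacC
  rw [f1, f2, Nat.cast_choose ℝ hk']
  have q1 : ((n - k).factorial : ℝ) ≠ 0 := by positivity
  have q2 : (k.factorial : ℝ) ≠ 0 := by positivity
  have q3 : (n.factorial : ℝ) ≠ 0 := by positivity
  simp only [eval_add, eval_X, eval_C]
  rw [show (k : ℝ) + (α + 1) = α + k + 1 by ring]
  field_simp
  simp only [A, one_div]
  ring

lemma span_ind (b : ℕ → Polynomial ℝ) (hb : ∀ k, (b k).natDegree ≤ k) (hb' : ∀ k, (b k).coeff k ≠ 0)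
    (Z : Polynomial ℝ → Prop) (Z0 : Z 0) (Zadd : ∀ f g, Z f → Z g → Z (f + g))
    (Zmul : ∀ c f, Z f → Z (C c * f)) (n : ℕ) (hZ : ∀ k < n, Z (b k)) :
    ∀ f : Polynomial ℝ, f.degree < n → Z f := by
  induction n with
  | zero =>
    intro f hf
    have : f = 0 := by
      rw [← degree_eq_bot]; 
      exact Nat.WithBot.lt_zero_iff.mp (by simpa using hf)
    rw [this]; exact Z0
  | succ n ih =>
    intro f hf
    have h1 : (f - C (f.coeff n / (b n).coeff n) * b n).degree < n := by
      rw [degree_lt_iff_coeff_zero] at hf ⊢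
      intro m hm
      rcases Nat.eq_or_lt_of_le hm with h | h
      · subst h
        simp [hb' n]
      · rw [coeff_sub, coeff_C_mul, hf m h, coeff_eq_zero_of_natDegree_lt (lt_of_le_of_lt (hb n) h)]
        simp
    have h2 := ih (fun k hk => hZ k (by omega)) _ h1
    have h3 := Zadd _ _ h2 (Zmul (f.coeff n / (b n).coeff n) _ (hZ n (by omega)))
    simpa using h3

lemma jacobi_orth {α β : ℝ} (hα : -1 < α) (hβ : -1 < β) (n : ℕ) (f : Polynomial ℝ)
    (hf : f.degree < n) : wtL α β (jacobiP α β n * f) = 0 := by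
  have hd : ∀ k : ℕ, ((1 - X : Polynomial ℝ) ^ k).natDegree ≤ k := by
    intro k
    have h1 : (1 - X : Polynomial ℝ).natDegree ≤ 1 := by compute_degree
    simpa using natDegree_pow_le_of_le k h1
  refine span_ind (fun k => (1 - X) ^ k) hd ?_
    (fun f => wtL α β (jacobiP α β n * f) = 0) ?_ ?_ ?_ n ?_ f hf
  · intro k
    have h1 : (1 - X : Polynomial ℝ).natDegree ≤ 1 := by compute_degree
    have := coeff_pow_of_natDegree_le (m := k) h1
    rw [mul_one] at this
    rw [this]
    simp [coeff_one, coeff_X]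
  · simp [wtL_zero]
  · intro f g h1 h2
    rw [mul_add, wtL_add hα hβ, h1, h2, add_zero]
  · intro c f h
    rw [mul_left_comm, wtL_C_mul, h, mul_zero]
  · intro k hk
    exact jacobi_orth_pow hα hβ hk

lemma iter_deriv_eval (j : ℕ) (f : Polynomial ℝ) :
    (derivative^[j] f).eval 1 = (j.factorial : ℝ) * (taylor 1 f).coeff j := by
  rw [taylor_coeff, ← factorial_smul_hasseDeriv]
  simp

lemma jacobiNormSq_eq (α β : ℝ) (n : ℕ) :
    jacobiNormSq α β n = wtL α β (jacobiP α β n * jacobiP α β n) := by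
  unfold jacobiNormSq wtL
  congr 1; ext x; simp; ring

lemma jacobiP_ne_zero {α β : ℝ} (hα : -1 < α) (hβ : -1 < β) (n : ℕ) : jacobiP α β n ≠ 0 := by
  intro h
  have := jacobiP_coeff_pos hα hβ n
  rw [h] at this; simp at this

lemma jacobiNormSq_pos {α β : ℝ} (hα : -1 < α) (hβ : -1 < β) (n : ℕ) :
    0 < jacobiNormSq α β n := by
  rw [jacobiNormSq_eq]
  have h := jacobiP_ne_zero hα hβ n
  refine wtL_pos hα hβ _ (mul_ne_zero h h) ?_
  intro x _
  rw [eval_mul]; exact mul_self_nonneg _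

lemma jacobi_orth_ne {α β : ℝ} (hα : -1 < α) (hβ : -1 < β) {i k : ℕ} (h : i ≠ k) :
    wtL α β (jacobiP α β i * jacobiP α β k) = 0 := by
  have key : ∀ i k : ℕ, i < k → wtL α β (jacobiP α β k * jacobiP α β i) = 0 := by
    intro i k hik
    apply jacobi_orth hα hβ
    refine lt_of_le_of_lt degree_le_natDegree ?_
    rw [jacobiP_natDegree hα hβ]
    exact_mod_cast hik
  rcases lt_or_gt_of_ne h with h | h
  · rw [mul_comm]; exact key _ _ h
  · exact key _ _ h

lemma kern_repr {α β : ℝ} (hα : -1 < α) (hβ : -1 < β) (j n : ℕ) (hn : 1 ≤ n) (f : Polynomial ℝ)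
    (hf : f.degree < n) :
    wtL α β (kernKPoly α β j (n - 1) * f) = (derivative^[j] f).eval 1 := by
  refine span_ind (fun k => jacobiP α β k) (jacobiP_natDegree_le α β)
    (fun k => (jacobiP_coeff_pos hα hβ k).ne')
    (fun f => wtL α β (kernKPoly α β j (n - 1) * f) = (derivative^[j] f).eval 1) ?_ ?_ ?_ n ?_ f hf
  · simp [wtL_zero]
  · intro f g h1 h2
    rw [mul_add, wtL_add hα hβ, h1, h2, iterate_map_add, eval_add]
  · intro c f h
    rw [mul_left_comm, wtL_C_mul, h, iterate_derivative_C_mul, eval_C_mul]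
  · intro k hk
    unfold kernKPoly
    rw [Finset.sum_mul, wtL_sum hα hβ, Nat.sub_add_cancel hn]
    rw [Finset.sum_eq_single k]
    · rw [mul_assoc, wtL_C_mul, ← jacobiNormSq_eq,
        div_mul_cancel₀ _ (jacobiNormSq_pos hα hβ k).ne']
    · intro i _ hik
      rw [mul_assoc, wtL_C_mul, jacobi_orth_ne hα hβ hik, mul_zero]
    · intro h; exact absurd (Finset.mem_range.mpr hk) h

lemma kernK_nonneg {α β : ℝ} (hα : -1 < α) (hβ : -1 < β) (j n : ℕ) :
    0 ≤ kernK α β j j n 1 1 := by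
  unfold kernK
  apply Finset.sum_nonneg
  intro i _
  exact div_nonneg (mul_self_nonneg _) (jacobiNormSq_pos hα hβ i).le

lemma kernKPoly_deriv (α β : ℝ) (j n : ℕ) :
    (derivative^[j] (kernKPoly α β j n)).eval 1 = kernK α β j j n 1 1 := by
  unfold kernKPoly kernK
  rw [iterate_derivative_sum, eval_finsetSum]
  apply Finset.sum_congr rfl
  intro i _
  rw [iterate_derivative_C_mul, eval_C_mul]
  ring

lemma sobQ_orth {α β : ℝ} (hα : -1 < α) (hβ : -1 < β) (j : ℕ) (Ms : ℕ → ℝ) (n : ℕ) (hn : 1 ≤ n)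
    (f : Polynomial ℝ) (hf : f.degree < n) :
    wtL α β (sobQ α β j Ms n * f) =
      -(Ms n * (derivative^[j] (jacobiP α β n)).eval 1 /
        (1 + Ms n * kernK α β j j (n - 1) 1 1)) * (derivative^[j] f).eval 1 := by
  unfold sobQ
  rw [sub_mul, wtL_sub hα hβ, jacobi_orth hα hβ n f hf, mul_assoc, wtL_C_mul,
    kern_repr hα hβ j n hn f hf]
  ring

lemma sobQ_deriv {α β : ℝ} (hα : -1 < α) (hβ : -1 < β) (j : ℕ) (Ms : ℕ → ℝ) (hMs : ∀ n, 0 ≤ Ms n)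
    (n : ℕ) :
    (derivative^[j] (sobQ α β j Ms n)).eval 1 =
      (derivative^[j] (jacobiP α β n)).eval 1 / (1 + Ms n * kernK α β j j (n - 1) 1 1) := by
  unfold sobQ
  rw [iterate_derivative_sub, eval_sub, iterate_derivative_C_mul, eval_C_mul, kernKPoly_deriv]
  have h1 := mul_nonneg (hMs n) (kernK_nonneg hα hβ j (n - 1))
  have : 1 + Ms n * kernK α β j j (n - 1) 1 1 ≠ 0 := by positivity
  field_simp
  ring

lemma sobQ_sub_degree (α β : ℝ) (j : ℕ) (Ms : ℕ → ℝ) (n : ℕ) (hn : 1 ≤ n) :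
    (sobQ α β j Ms n - jacobiP α β n).degree < n := by
  unfold sobQ
  rw [sub_sub_cancel_left, degree_neg]
  have h : (kernKPoly α β j (n - 1)).natDegree ≤ n - 1 := by
    unfold kernKPoly
    apply natDegree_sum_le_of_forall_le
    intro i hi
    rw [Finset.mem_range] at hi
    refine (natDegree_C_mul_le _ _).trans ((jacobiP_natDegree_le α β i).trans (by omega))
  refine lt_of_le_of_lt degree_le_natDegree ?_
  have h2 := (natDegree_C_mul_le (Ms n * (derivative^[j] (jacobiP α β n)).eval 1 /
        (1 + Ms n * kernK α β j j (n - 1) 1 1)) (kernKPoly α β j (n - 1))).trans h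
  exact_mod_cast (by omega : _ < n)

lemma sobQ_coeff_pos {α β : ℝ} (hα : -1 < α) (hβ : -1 < β) (j : ℕ) (Ms : ℕ → ℝ) (n : ℕ)
    (hn : 1 ≤ n) : 0 < (sobQ α β j Ms n).coeff n := by
  have h := (degree_lt_iff_coeff_zero _ _).1 (sobQ_sub_degree α β j Ms n hn) n le_rfl
  rw [coeff_sub] at h
  have := jacobiP_coeff_pos hα hβ n
  linarith

lemma sobQ_natDegree {α β : ℝ} (hα : -1 < α) (hβ : -1 < β) (j : ℕ) (Ms : ℕ → ℝ) (n : ℕ)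
    (hn : 1 ≤ n) : (sobQ α β j Ms n).natDegree = n := by
  refine le_antisymm ?_ (le_natDegree_of_ne_zero (sobQ_coeff_pos hα hβ j Ms n hn).ne')
  rw [natDegree_le_iff_coeff_eq_zero]
  intro N hN
  have h := (degree_lt_iff_coeff_zero _ _).1 (sobQ_sub_degree α β j Ms n hn) N hN.le
  rw [coeff_sub, coeff_eq_zero_of_natDegree_lt (lt_of_le_of_lt (jacobiP_natDegree_le α β n) hN)] at h
  linarith

/-- Node polynomial. -/
noncomputable def nodeP (S : Finset ℝ) : Polynomial ℝ := ∏ t ∈ S, (X - C t)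

lemma nodeP_monic (S : Finset ℝ) : (nodeP S).Monic := monic_prod_of_monic _ _ fun t _ => monic_X_sub_C t

lemma nodeP_natDegree (S : Finset ℝ) : (nodeP S).natDegree = S.card := by
  unfold nodeP
  rw [natDegree_prod_of_monic _ _ fun t _ => monic_X_sub_C t]
  simp

lemma nodeP_insert {S : Finset ℝ} {t : ℝ} (h : t ∉ S) : nodeP (insert t S) = (X - C t) * nodeP S := by
  unfold nodeP
  rw [Finset.prod_insert h]

lemma nodeP_eval_pos {S : Finset ℝ} {x : ℝ} (h : ∀ t ∈ S, t < x) : 0 < (nodeP S).eval x := by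
  unfold nodeP
  rw [eval_prod]
  apply Finset.prod_pos
  intro t ht
  simp [h t ht]

lemma nodeP_dvd {S : Finset ℝ} {Q : Polynomial ℝ} (hQ : Q ≠ 0) (h : ∀ t ∈ S, Q.eval t = 0) :
    nodeP S ∣ Q := by
  have h1 : S.val ≤ Q.roots := by
    rw [Multiset.le_iff_subset S.nodup]
    intro t ht
    rw [mem_roots hQ]
    exact h t ht
  exact (Multiset.prod_X_sub_C_dvd_iff_le_roots hQ S.val).2 h1

lemma exists_nodes : ∀ (d : ℕ) (Q : Polynomial ℝ), Q.natDegree = d → Q ≠ 0 →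
    ∃ S : Finset ℝ, (∀ t ∈ S, t ∈ Set.Ioo (-1 : ℝ) 1 ∧ Q.eval t = 0) ∧
      ((∀ x ∈ Set.Ioo (-1 : ℝ) 1, 0 ≤ (Q * nodeP S).eval x) ∨
       (∀ x ∈ Set.Ioo (-1 : ℝ) 1, (Q * nodeP S).eval x ≤ 0)) := by
  intro d
  induction d with
  | zero =>
    intro Q hd hQ
    refine ⟨∅, by simp, ?_⟩
    rw [eq_C_of_natDegree_eq_zero hd]
    simp only [nodeP, Finset.prod_empty, mul_one, eval_C]
    rcases le_total 0 (Q.coeff 0) with h | h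
    · left; intro _ _; exact h
    · right; intro _ _; exact h
  | succ d ih =>
    intro Q hd hQ
    by_cases hr : ∃ t ∈ Set.Ioo (-1 : ℝ) 1, Q.eval t = 0
    · obtain ⟨t, ht, h0⟩ := hr
      obtain ⟨q, rfl⟩ := dvd_iff_isRoot.2 h0
      have hq : q ≠ 0 := right_ne_zero_of_mul hQ
      have hdq : q.natDegree = d := by
        rw [natDegree_mul (X_sub_C_ne_zero t) hq, natDegree_X_sub_C] at hd
        omega
      obtain ⟨S, hS, hsign⟩ := ih q hdq hq
      by_cases htS : t ∈ S
      · refine ⟨S.erase t, ?_, ?_⟩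
        · intro s hs
          have := hS s (Finset.mem_of_mem_erase hs)
          exact ⟨this.1, by rw [eval_mul, this.2, mul_zero]⟩
        · have e : (X - C t) * q * nodeP (S.erase t) = q * nodeP S := by
            conv_rhs => rw [← Finset.insert_erase htS, nodeP_insert (Finset.notMem_erase t S)]
            ring
          rw [e]; exact hsign
      · refine ⟨insert t S, ?_, ?_⟩
        · intro s hs
          rcases Finset.mem_insert.1 hs with rfl | hs
          · exact ⟨ht, h0⟩
          · exact ⟨(hS s hs).1, by rw [eval_mul, (hS s hs).2, mul_zero]⟩
        · have e : ∀ x, ((X - C t) * q * nodeP (insert t S)).eval x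
              = (x - t) ^ 2 * (q * nodeP S).eval x := by
            intro x
            rw [nodeP_insert htS]
            simp only [eval_mul, eval_sub, eval_X, eval_C]
            ring
          simp only [e]
          rcases hsign with h | h
          · left; intro x hx; exact mul_nonneg (sq_nonneg _) (h x hx)
          · right; intro x hx; exact mul_nonpos_of_nonneg_of_nonpos (sq_nonneg _) (h x hx)
    · push Not at hr
      refine ⟨∅, by simp, ?_⟩
      simp only [nodeP, Finset.prod_empty, mul_one]
      by_contra hcon
      push Not at hcon
      obtain ⟨⟨a, ha, ha'⟩, ⟨b, hb, hb'⟩⟩ := hcon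
      have hsub : Set.uIcc a b ⊆ Set.Ioo (-1 : ℝ) 1 := by
        intro z hz
        exact Set.ordConnected_Ioo.uIcc_subset ha hb hz
      have := intermediate_value_uIcc (a := a) (b := b) (f := fun x => Q.eval x)
        Q.continuous.continuousOn
      have h0 : (0 : ℝ) ∈ Set.uIcc (Q.eval a) (Q.eval b) := by
        rw [Set.mem_uIcc]; left; exact ⟨ha'.le, hb'.le⟩
      obtain ⟨z, hz, hz0⟩ := this h0
      exact hr z (hsub hz) hz0

lemma taylor_nodeP_insert_zero {S : Finset ℝ} {t : ℝ} (h : t ∉ S) :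
    (taylor 1 (nodeP (insert t S))).coeff 0 = (1 - t) * (taylor 1 (nodeP S)).coeff 0 := by
  rw [nodeP_insert h]
  simp

lemma taylor_lin_mul_succ (t : ℝ) (f : Polynomial ℝ) (k : ℕ) :
    (taylor 1 ((X - C t) * f)).coeff (k + 1) =
      (taylor 1 f).coeff k + (1 - t) * (taylor 1 f).coeff (k + 1) := by
  rw [taylor_mul, map_sub, taylor_X, taylor_C,
    show (X + C 1 - C t : Polynomial ℝ) = X + C (1 - t) by rw [C_sub]; ring,
    add_mul, coeff_add, coeff_X_mul, coeff_C_mul]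

lemma taylor_nodeP_nonneg {S : Finset ℝ} (h : ∀ t ∈ S, t < 1) (k : ℕ) :
    0 ≤ (taylor 1 (nodeP S)).coeff k := by
  induction S using Finset.induction_on generalizing k with
  | empty =>
    simp only [nodeP, Finset.prod_empty, taylor_one, coeff_C]
    split_ifs <;> norm_num
  | insert t S ht ih =>
    have ih' := ih (fun s hs => h s (Finset.mem_insert_of_mem hs))
    have h1 : 0 < 1 - t := by linarith [h t (Finset.mem_insert_self t S)]
    cases k with
    | zero => rw [taylor_nodeP_insert_zero ht]; exact mul_nonneg h1.le (ih' 0)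
    | succ k =>
      rw [nodeP_insert ht, taylor_lin_mul_succ]
      have := ih' k
      have := mul_nonneg h1.le (ih' (k + 1))
      linarith

lemma taylor_nodeP_pos {S : Finset ℝ} (h : ∀ t ∈ S, t < 1) (k : ℕ) (hk : k ≤ S.card) :
    0 < (taylor 1 (nodeP S)).coeff k := by
  induction S using Finset.induction_on generalizing k with
  | empty =>
    simp only [Finset.card_empty, nonpos_iff_eq_zero] at hk
    subst hk
    simp [nodeP]
  | insert t S ht ih =>
    have hS := (fun s hs => h s (Finset.mem_insert_of_mem hs) : ∀ s ∈ S, s < 1)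
    have ih' := ih hS
    have h1 : 0 < 1 - t := by linarith [h t (Finset.mem_insert_self t S)]
    cases k with
    | zero => rw [taylor_nodeP_insert_zero ht]; exact mul_pos h1 (ih' 0 (by omega))
    | succ k =>
      rw [nodeP_insert ht, taylor_lin_mul_succ]
      rw [Finset.card_insert_of_notMem ht] at hk
      have := ih' k (by omega)
      have := mul_nonneg h1.le (taylor_nodeP_nonneg hS (k + 1))
      linarith

lemma taylor_nodeP_ratio {S : Finset ℝ} (h : ∀ t ∈ S, t ∈ Set.Ioo (-1 : ℝ) 1) (k : ℕ) :
    ((S.card : ℝ) - k) * (taylor 1 (nodeP S)).coeff k ≤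
      2 * (k + 1) * (taylor 1 (nodeP S)).coeff (k + 1) := by
  induction S using Finset.induction_on generalizing k with
  | empty =>
    simp only [nodeP, Finset.prod_empty, taylor_one, coeff_C]
    rcases Nat.eq_zero_or_pos k with rfl | hk
    · simp
    · simp [hk.ne']
  | insert t S ht ih =>
    have hS := (fun s hs => h s (Finset.mem_insert_of_mem hs) : ∀ s ∈ S, s ∈ Set.Ioo (-1 : ℝ) 1)
    have ih' := ih hS
    have hn := taylor_nodeP_nonneg (fun s hs => (hS s hs).2)
    have h0 := h t (Finset.mem_insert_self t S)
    have h1 : 0 < 1 - t := by linarith [h0.2]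
    have h2 : 0 < 1 + t := by linarith [h0.1]
    rw [Finset.card_insert_of_notMem ht]
    cases k with
    | zero =>
      rw [taylor_nodeP_insert_zero ht, nodeP_insert ht, taylor_lin_mul_succ]
      have i0 := mul_le_mul_of_nonneg_left (ih' 0) h1.le
      have i1 := mul_nonneg h2.le (hn 0)
      push_cast at i0 ⊢
      nlinarith
    | succ k =>
      rw [nodeP_insert ht, taylor_lin_mul_succ, taylor_lin_mul_succ]
      have i0 := ih' k
      have i1 := mul_le_mul_of_nonneg_left (ih' (k + 1)) h1.le
      have i2 := mul_nonneg h2.le (hn (k + 1))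
      push_cast at i0 i1 ⊢
      nlinarith

lemma nodeP_logderiv {S : Finset ℝ} {b : ℝ} (hb : b < 1) (h : ∀ t ∈ S, t ≤ b) :
    (1 - b) * (taylor 1 (nodeP S)).coeff 1 ≤ S.card * (taylor 1 (nodeP S)).coeff 0 := by
  induction S using Finset.induction_on with
  | empty => simp [nodeP, coeff_one]
  | insert t S ht ih =>
    have hS := (fun s hs => h s (Finset.mem_insert_of_mem hs) : ∀ s ∈ S, s ≤ b)
    have ih' := ih hS
    have hn := taylor_nodeP_nonneg (fun s hs => lt_of_le_of_lt (hS s hs) hb)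
    have h0 := h t (Finset.mem_insert_self t S)
    rw [Finset.card_insert_of_notMem ht, taylor_nodeP_insert_zero ht, nodeP_insert ht,
      taylor_lin_mul_succ]
    have i0 := mul_le_mul_of_nonneg_left ih' (by linarith : 0 ≤ 1 - t)
    have i1 := mul_nonneg (by linarith : 0 ≤ b - t) (hn 0)
    push_cast
    nlinarith

lemma wtL_ne_zero {α β : ℝ} (hα : -1 < α) (hβ : -1 < β) (f : Polynomial ℝ) (hf : f ≠ 0)
    (h : (∀ x ∈ Set.Ioo (-1 : ℝ) 1, 0 ≤ f.eval x) ∨ (∀ x ∈ Set.Ioo (-1 : ℝ) 1, f.eval x ≤ 0)) :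
    wtL α β f ≠ 0 := by
  rcases h with h | h
  · exact (wtL_pos hα hβ f hf h).ne'
  · have h1 := wtL_pos hα hβ (C (-1) * f) (mul_ne_zero (by simp) hf) (by
      intro x hx
      have := h x hx
      rw [eval_C_mul]; linarith)
    rw [wtL_C_mul] at h1
    intro h0
    rw [h0] at h1; simp at h1

lemma nodeP_degree_lt {S : Finset ℝ} {n : ℕ} (h : S.card < n) : (nodeP S).degree < n := by
  refine lt_of_le_of_lt degree_le_natDegree ?_
  rw [nodeP_natDegree]; exact_mod_cast h

lemma jacobiP_split {α β : ℝ} (hα : -1 < α) (hβ : -1 < β) (n : ℕ) :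
    ∃ (S : Finset ℝ) (c : ℝ), 0 < c ∧ S.card = n ∧ (∀ t ∈ S, t ∈ Set.Ioo (-1 : ℝ) 1) ∧
      jacobiP α β n = C c * nodeP S := by
  have hP := jacobiP_ne_zero hα hβ n
  obtain ⟨S, hS, hsign⟩ := exists_nodes _ (jacobiP α β n) rfl hP
  have hcard : n ≤ S.card := by
    by_contra hlt
    push Not at hlt
    exact wtL_ne_zero hα hβ _ (mul_ne_zero hP (nodeP_monic S).ne_zero) hsign
      (jacobi_orth hα hβ n _ (nodeP_degree_lt hlt))
  obtain ⟨q, hq⟩ := nodeP_dvd hP (fun t ht => (hS t ht).2)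
  have hq0 : q ≠ 0 := by rintro rfl; simp at hq; exact hP hq
  have hd := congrArg natDegree hq
  rw [jacobiP_natDegree hα hβ, natDegree_mul (nodeP_monic S).ne_zero hq0, nodeP_natDegree] at hd
  have hqd : q.natDegree = 0 := by omega
  have hl := congrArg leadingCoeff hq
  rw [leadingCoeff_mul, (nodeP_monic S).leadingCoeff, one_mul, leadingCoeff, leadingCoeff,
    jacobiP_natDegree hα hβ, hqd] at hl
  refine ⟨S, q.coeff 0, ?_, by omega, fun t ht => (hS t ht).1, ?_⟩
  · rw [← hl]; exact jacobiP_coeff_pos hα hβ n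
  · rw [hq]
    conv_lhs => rw [eq_C_of_natDegree_eq_zero hqd]
    ring

lemma sobQ_nodes {α β : ℝ} (hα : -1 < α) (hβ : -1 < β) (j : ℕ) (hj : 1 ≤ j) (Ms : ℕ → ℝ) (n : ℕ)
    (hn : 1 ≤ n) :
    ∃ S : Finset ℝ, n ≤ S.card + 1 ∧
      (∀ t ∈ S, t ∈ Set.Ioo (-1 : ℝ) 1 ∧ (sobQ α β j Ms n).eval t = 0) := by
  have hQ : sobQ α β j Ms n ≠ 0 := by
    intro h
    have := sobQ_coeff_pos hα hβ j Ms n hn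
    rw [h] at this; simp at this
  obtain ⟨S, hS, hsign⟩ := exists_nodes _ (sobQ α β j Ms n) rfl hQ
  refine ⟨S, ?_, hS⟩
  by_contra hlt
  push Not at hlt
  have hS1 : ∀ t ∈ S, t < 1 := fun t ht => (hS t ht).1.2
  have hF := (nodeP_monic S).ne_zero
  by_cases hc : S.card < j
  · have h0 : (derivative^[j] (nodeP S)).eval 1 = 0 := by
      rw [iter_deriv_eval, coeff_eq_zero_of_natDegree_lt, mul_zero]
      rw [natDegree_taylor, nodeP_natDegree]; exact hc
    refine wtL_ne_zero hα hβ _ (mul_ne_zero hQ hF) hsign ?_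
    rw [sobQ_orth hα hβ j Ms n hn _ (nodeP_degree_lt (by omega)), h0, mul_zero]
  · push Not at hc
    obtain ⟨i, rfl⟩ : ∃ i, j = i + 1 := ⟨j - 1, by omega⟩
    have p1 := taylor_nodeP_pos hS1 (i + 1) hc
    have p0 := taylor_nodeP_pos hS1 i (by omega)
    set F1 := (taylor 1 (nodeP S)).coeff (i + 1)
    set F0 := (taylor 1 (nodeP S)).coeff i
    set s : ℝ := 1 + F0 / F1 with hs
    have hs1 : 1 < s := by rw [hs]; have := div_pos p0 p1; linarith
    have h0 : (derivative^[i + 1] ((X - C s) * nodeP S)).eval 1 = 0 := by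
      rw [iter_deriv_eval, taylor_lin_mul_succ]
      change _ * (F0 + (1 - s) * F1) = 0
      rw [hs]
      field_simp
      ring
    have hdeg : ((X - C s) * nodeP S).degree < (n : WithBot ℕ) := by
      refine lt_of_le_of_lt degree_le_natDegree ?_
      rw [natDegree_mul (X_sub_C_ne_zero s) hF, nodeP_natDegree, natDegree_X_sub_C]
      exact_mod_cast (by omega : 1 + S.card < n)
    refine wtL_ne_zero hα hβ (sobQ α β (i + 1) Ms n * ((X - C s) * nodeP S))
      (mul_ne_zero hQ (mul_ne_zero (X_sub_C_ne_zero s) hF)) ?_ ?_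
    · have e : ∀ x, (sobQ α β (i + 1) Ms n * ((X - C s) * nodeP S)).eval x =
          (x - s) * (sobQ α β (i + 1) Ms n * nodeP S).eval x := by
        intro x
        simp only [eval_mul, eval_sub, eval_X, eval_C]; ring
      simp only [e]
      rcases hsign with h | h
      · right; intro x hx
        exact mul_nonpos_of_nonpos_of_nonneg (by linarith [hx.2]) (h x hx)
      · left; intro x hx
        exact mul_nonneg_of_nonpos_of_nonpos (by linarith [hx.2]) (h x hx)
    · rw [sobQ_orth hα hβ _ Ms n hn _ hdeg, h0, mul_zero]

lemma jacobiP_iter_deriv_pos {α β : ℝ} (hα : -1 < α) (hβ : -1 < β) (j n : ℕ) (h : j ≤ n) :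
    0 < (derivative^[j] (jacobiP α β n)).eval 1 := by
  obtain ⟨S, c, hc, hcard, hS, hP⟩ := jacobiP_split hα hβ n
  rw [iter_deriv_eval, hP, taylor_mul, taylor_C, coeff_C_mul]
  have := taylor_nodeP_pos (fun t ht => (hS t ht).2) j (by omega)
  positivity

lemma upper_bound {α β : ℝ} (hα : -1 < α) (hβ : -1 < β) (j : ℕ) (hj : 1 ≤ j) (Ms : ℕ → ℝ)
    (hMs : ∀ n, 0 ≤ Ms n) (n : ℕ) (hn : j < n) (y : ℝ) (hy : (sobQ α β j Ms n).eval y = 0) :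
    y ≤ 1 + 2 * j / ((n : ℝ) - j) := by
  have hjn : (0 : ℝ) < (n : ℝ) - j := by
    have : (j : ℝ) < n := by exact_mod_cast hn
    linarith
  by_contra hlt
  push Not at hlt
  have hpos : 0 < 2 * (j : ℝ) / ((n : ℝ) - j) := by
    have : (0 : ℝ) < j := by exact_mod_cast hj
    positivity
  have hn1 : 1 ≤ n := by omega
  have hy1 : 1 < y := by linarith
  obtain ⟨S, hcard, hS⟩ := sobQ_nodes hα hβ j hj Ms n hn1
  have hQc := sobQ_coeff_pos hα hβ j Ms n hn1
  have hQ : sobQ α β j Ms n ≠ 0 := by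
    intro h
    rw [h] at hQc; simp at hQc
  have hyS : y ∉ S := fun h => by linarith [(hS y h).1.2]
  obtain ⟨q, hq⟩ := nodeP_dvd (S := insert y S) hQ (by
    intro t ht
    rcases Finset.mem_insert.1 ht with rfl | ht
    · exact hy
    · exact (hS t ht).2)
  have hq0 : q ≠ 0 := by rintro rfl; rw [mul_zero] at hq; exact hQ hq
  have hd := congrArg natDegree hq
  rw [sobQ_natDegree hα hβ j Ms n hn1, natDegree_mul (nodeP_monic _).ne_zero hq0, nodeP_natDegree,
    Finset.card_insert_of_notMem hyS] at hd
  have hqd : q.natDegree = 0 := by omega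
  have hl := congrArg leadingCoeff hq
  rw [leadingCoeff_mul, (nodeP_monic _).leadingCoeff, one_mul, leadingCoeff, leadingCoeff,
    sobQ_natDegree hα hβ j Ms n hn1, hqd] at hl
  have hcpos : 0 < q.coeff 0 := by rw [← hl]; exact hQc
  have hD : 0 < (derivative^[j] (sobQ α β j Ms n)).eval 1 := by
    rw [sobQ_deriv hα hβ j Ms hMs n]
    have := mul_nonneg (hMs n) (kernK_nonneg hα hβ j (n - 1))
    exact div_pos (jacobiP_iter_deriv_pos hα hβ j n hn.le) (by linarith)
  obtain ⟨i, rfl⟩ : ∃ i, j = i + 1 := ⟨j - 1, by omega⟩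
  rw [iter_deriv_eval, hq, nodeP_insert hyS, eq_C_of_natDegree_eq_zero hqd, mul_comm _ (C _),
    taylor_mul, taylor_C, coeff_C_mul, taylor_lin_mul_succ] at hD
  have hfac : (0 : ℝ) < ((i + 1).factorial : ℝ) := by positivity
  have hD2 := pos_of_mul_pos_right (pos_of_mul_pos_right hD hfac.le) hcpos.le
  have hr := taylor_nodeP_ratio (fun t ht => (hS t ht).1) i
  have p1 := taylor_nodeP_nonneg (fun t ht => (hS t ht).1.2) (i + 1)
  set F1 := (taylor 1 (nodeP S)).coeff (i + 1)
  set F0 := (taylor 1 (nodeP S)).coeff i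
  have hcard2 : (S.card : ℝ) = n - 1 := by
    have : n = S.card + 1 := by omega
    rw [this]; push_cast; ring
  rw [hcard2] at hr
  push_cast at *
  have h3 : 2 * ((i : ℝ) + 1) < (y - 1) * ((n : ℝ) - (i + 1)) := by
    have := (div_lt_iff₀ hjn).1 (by linarith : 2 * ((i : ℝ) + 1) / (n - (i + 1)) < y - 1)
    linarith
  have h4 := mul_pos hjn hD2
  have h5 := mul_le_mul_of_nonneg_right h3.le p1
  nlinarith

lemma lower_bound {α β : ℝ} (hα : -1 < α) (hβ : -1 < β) (j : ℕ) (Ms : ℕ → ℝ)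
    (hMs : ∀ n, 0 ≤ Ms n) (n : ℕ) (hn : j < n) (y : ℝ)
    (hy : IsGreatest {x : ℝ | (sobQ α β j Ms n).eval x = 0} y) :
    1 - 2 * (α + 1) / (n + α + β + 1) ≤ y := by
  have hn1 : 1 ≤ n := by omega
  obtain ⟨S, c, hc, hcard, hS, hP⟩ := jacobiP_split hα hβ n
  have hne : S.Nonempty := by rw [← Finset.card_pos]; omega
  obtain ⟨b, hbS, hb⟩ : ∃ b ∈ S, ∀ t ∈ S, t ≤ b :=
    ⟨S.max' hne, S.max'_mem hne, fun t ht => S.le_max' t ht⟩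
  have hb1 := (hS b hbS).2
  have hratio := jacobiP_ratio hα hβ n hn1
  have hn0 : (1 : ℝ) ≤ n := by exact_mod_cast hn1
  have hden : 0 < (n : ℝ) + α + β + 1 := by linarith
  -- the largest zero of the Jacobi polynomial is close to 1
  have hb2 : 1 - 2 * (α + 1) / (n + α + β + 1) ≤ b := by
    have h1 := nodeP_logderiv hb1 hb
    have p0 := taylor_nodeP_pos (fun t ht => (hS t ht).2) 0 (Nat.zero_le _)
    rw [← taylor_coeff_one, ← taylor_coeff_zero, hP, taylor_mul, taylor_C, coeff_C_mul,
      coeff_C_mul] at hratio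
    set F1 := (taylor 1 (nodeP S)).coeff 1
    set F0 := (taylor 1 (nodeP S)).coeff 0
    rw [hcard] at h1
    have h2 : 2 * (α + 1) * F1 = n * (n + α + β + 1) * F0 := by
      have : c * (2 * (α + 1) * F1) = c * (n * (n + α + β + 1) * F0) := by linarith
      exact mul_left_cancel₀ hc.ne' this
    have h3 : (1 - b) * (n + α + β + 1) ≤ 2 * (α + 1) := by
      have h4 := mul_le_mul_of_nonneg_left h1 (by linarith : 0 ≤ 2 * (α + 1))
      have h5 : (n * F0) * ((1 - b) * (n + α + β + 1)) ≤ (n * F0) * (2 * (α + 1)) := by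
        calc (n * F0) * ((1 - b) * (n + α + β + 1)) = (1 - b) * (2 * (α + 1) * F1) := by
              rw [h2]; ring
          _ ≤ _ := by linarith
      exact le_of_mul_le_mul_left h5 (by positivity)
    have h6 := (le_div_iff₀ hden).2 h3
    linarith
  refine hb2.trans ?_
  -- the Sobolev polynomial is nonpositive at `b`
  set T := S.erase b with hT
  have hST : nodeP S = (X - C b) * nodeP T := by
    rw [← nodeP_insert (Finset.notMem_erase b S), Finset.insert_erase hbS]
  have hTcard : T.card < n := by
    rw [← hcard]; exact Finset.card_erase_lt_of_mem hbS
  set g := nodeP T with hg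
  have hgdeg : g.degree < n := nodeP_degree_lt hTcard
  have hred : ∀ f : Polynomial ℝ, f.degree < n → wtL α β (f * g) = f.eval b * wtL α β g := by
    intro f hf
    obtain ⟨r, hr⟩ := X_sub_C_dvd_sub_C_eval (a := b) (p := f)
    have hrdeg : r.degree < n := by
      by_cases hr0 : r = 0
      · rw [hr0, degree_zero]; exact WithBot.bot_lt_coe _
      have h1 : r.degree ≤ ((X - C b) * r).degree := by
        rw [degree_mul, degree_X_sub_C, degree_eq_natDegree hr0]
        norm_cast; omega
      refine lt_of_le_of_lt h1 ?_
      rw [← hr]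
      refine lt_of_le_of_lt (degree_sub_le _ _) (max_lt hf ?_)
      refine lt_of_le_of_lt degree_C_le ?_
      exact_mod_cast hn1
    have e : f * g = C (f.eval b) * g + C c⁻¹ * (jacobiP α β n * r) := by
      have : f = C (f.eval b) + (X - C b) * r := by rw [← hr]; ring
      have hcc : (C c⁻¹ * C c : Polynomial ℝ) = 1 := by
        rw [← C_mul, inv_mul_cancel₀ hc.ne', C_1]
      rw [hP, hST]
      conv_lhs => rw [this]
      linear_combination (-(X - C b) * g * r) * hcc
    rw [e, wtL_add hα hβ, wtL_C_mul, wtL_C_mul, jacobi_orth hα hβ n r hrdeg, mul_zero, add_zero]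
  have hgb : 0 < g.eval b := by
    apply nodeP_eval_pos
    intro t ht
    exact lt_of_le_of_ne (hb t (Finset.mem_of_mem_erase ht)) (Finset.ne_of_mem_erase ht)
  have hg0 : g ≠ 0 := (nodeP_monic T).ne_zero
  have hLg : 0 < wtL α β g := by
    have h1 := wtL_pos hα hβ (g * g) (mul_ne_zero hg0 hg0) (by
      intro x _; rw [eval_mul]; exact mul_self_nonneg _)
    rw [hred g hgdeg] at h1
    exact pos_of_mul_pos_right h1 hgb.le
  have hQb : (sobQ α β j Ms n).eval b ≤ 0 := by
    have h1 := sobQ_orth hα hβ j Ms n hn1 g hgdeg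
    have h2 := hred _ (sobQ_sub_degree α β j Ms n hn1)
    rw [sub_mul, wtL_sub hα hβ, jacobi_orth hα hβ n g hgdeg, sub_zero, h1, eval_sub] at h2
    have h3 : (jacobiP α β n).eval b = 0 := by rw [hP, hST]; simp
    rw [h3, sub_zero] at h2
    have h4 : 0 ≤ (derivative^[j] g).eval 1 := by
      rw [iter_deriv_eval]
      exact mul_nonneg (by positivity) (taylor_nodeP_nonneg
        (fun t ht => (hS t (Finset.mem_of_mem_erase ht)).2) j)
    have h5 : 0 ≤ Ms n * (derivative^[j] (jacobiP α β n)).eval 1 /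
        (1 + Ms n * kernK α β j j (n - 1) 1 1) := by
      have := mul_nonneg (hMs n) (kernK_nonneg hα hβ j (n - 1))
      exact div_nonneg (mul_nonneg (hMs n) (jacobiP_iter_deriv_pos hα hβ j n hn.le).le)
        (by linarith)
    have h6 := mul_nonneg h5 h4
    by_contra hcon
    push Not at hcon
    have := mul_pos hcon hLg
    linarith
  -- so there is a zero at or above `b`
  have htop : Tendsto (fun x => (sobQ α β j Ms n).eval x) atTop atTop := by
    apply tendsto_atTop_of_leadingCoeff_nonneg
    · rw [← natDegree_pos_iff_degree_pos, sobQ_natDegree hα hβ j Ms n hn1]; omega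
    · rw [leadingCoeff, sobQ_natDegree hα hβ j Ms n hn1]
      exact (sobQ_coeff_pos hα hβ j Ms n hn1).le
  obtain ⟨z, hz0, hzb⟩ := ((htop.eventually (eventually_ge_atTop 0)).and
    (eventually_ge_atTop b)).exists
  obtain ⟨w, hw, hw0⟩ := intermediate_value_Icc hzb
    (f := fun x => (sobQ α β j Ms n).eval x) (sobQ α β j Ms n).continuous.continuousOn ⟨hQb, hz0⟩
  exact hw.1.trans (hy.2 hw0)

/-- for `γ < 2(α+2j+1)`, the largest real zero of `Q_n` tends to 1. -/
theorem sobQ_largest_zero_tendsto_one (α β : ℝ) (hα : -1 < α) (hβ : -1 < β) (j : ℕ)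
    (hj : 1 ≤ j) (γ M : ℝ) (hM : 0 < M) (Ms : ℕ → ℝ) (hMs : ∀ n, 0 ≤ Ms n)
    (hlim : Filter.Tendsto (fun n : ℕ => Ms n * (n : ℝ) ^ γ) Filter.atTop (nhds M))
    (hγ : γ < 2 * (α + 2 * j + 1)) (y : ℕ → ℝ)
    (hy : ∀ n, 1 ≤ n → IsGreatest {x : ℝ | (sobQ α β j Ms n).eval x = 0} (y n)) :
    Filter.Tendsto y Filter.atTop (nhds 1) := by
  have hc : Tendsto (fun n : ℕ => (n : ℝ)) atTop atTop := tendsto_natCast_atTop_atTop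
  have hl : Tendsto (fun n : ℕ => 1 - 2 * (α + 1) / ((n : ℝ) + α + β + 1)) atTop (nhds 1) := by
    have h1 : Tendsto (fun n : ℕ => (n : ℝ) + α + β + 1) atTop atTop :=
      tendsto_atTop_add_const_right _ _ (tendsto_atTop_add_const_right _ _
        (tendsto_atTop_add_const_right _ _ hc))
    have h2 := (tendsto_const_nhds (x := (1 : ℝ))).sub (h1.const_div_atTop (2 * (α + 1)))
    rwa [sub_zero] at h2
  have hu : Tendsto (fun n : ℕ => 1 + 2 * j / ((n : ℝ) - j)) atTop (nhds 1) := by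
    have h1 : Tendsto (fun n : ℕ => (n : ℝ) - j) atTop atTop := by
      simpa [sub_eq_add_neg] using tendsto_atTop_add_const_right _ (-(j : ℝ)) hc
    have h2 := (tendsto_const_nhds (x := (1 : ℝ))).add (h1.const_div_atTop (2 * (j : ℝ)))
    rwa [add_zero] at h2
  refine tendsto_of_tendsto_of_tendsto_of_le_of_le' hl hu ?_ ?_
  · filter_upwards [eventually_gt_atTop j] with n hn
    exact lower_bound hα hβ j Ms hMs n hn (y n) (hy n (by omega))
  · filter_upwards [eventually_gt_atTop j] with n hn
    exact upper_bound hα hβ j hj Ms hMs n hn (y n) (hy n (by omega)).1
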